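/- arXiv:2205.14258 — 10 statements merged into one kernel-verified Lean document; each statement's English description precedes it below -/
import Mathlib

section
/- Let σ : ℝ → ℝ be a function and n a positive natural number such that the matrix σ(I_n) (entrywise application of σ to the n×n identity matrix) is invertible. Then G_{σ_n} is a subgroup of GL_n(ℝ); in particular, the identity matrix lies in G_{σ_n}, and for all A₁, A₂ ∈ G_{σ_n} the product A₁·A₂⁻¹ lies in G_{σ_n}. -/
open Matrix

noncomputable section

/-- Coordinatewise application of `σ : ℝ → ℝ` to vectors in `ℝ^n`. -/
def actCoord (σ : ℝ → ℝ) (n : ℕ) (x : Fin n → ℝ) : Fin n → ℝ := fun i => σ (x i)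

/-- The intertwiner group `G_{σ_n}` of the nonlinearity `σ_n`, as a set of invertible
`n × n` real matrices. -/
def Intertwiner (σ : ℝ → ℝ) (n : ℕ) : Set (Matrix (Fin n) (Fin n) ℝ) :=
  {A | IsUnit A ∧ ∃ B : Matrix (Fin n) (Fin n) ℝ, IsUnit B ∧
    ∀ x : Fin n → ℝ, actCoord σ n (A.mulVec x) = B.mulVec (actCoord σ n x)}

section GroupAction

variable (G H : Type*) {X Y : Type*} [Group G] [Group H] [MulAction G X] [MulAction H Y]

/-- The pairs `(g, h)` with `f ∘ g = h ∘ f`, for a map `f` from a `G`-set to an `H`-set. No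
equivariance of `f` is assumed, and `h` need not be determined by `g`. -/
def intertwiningPairs (f : X → Y) : Subgroup (G × H) where
  carrier := {p | Function.Semiconj f (p.1 • ·) (p.2 • ·)}
  one_mem' x := by simp only [Prod.fst_one, Prod.snd_one, one_smul]
  mul_mem' {p q} hp hq x := by
    simp only [Prod.fst_mul, Prod.snd_mul, mul_smul]
    exact hp.comp_right hq x
  inv_mem' {p} hp := hp.inverses_right (smul_inv_smul p.1) (inv_smul_smul p.2)

/-- The intertwiner group of `f`: the `g` such that `f ∘ g = h ∘ f` for some `h`, obtained as the
projection of the group of intertwining pairs. -/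
def intertwinerSubgroup (f : X → Y) : Subgroup G :=
  (intertwiningPairs G H f).map (MonoidHom.fst G H)

variable {G H}

theorem mem_intertwiningPairs_iff {f : X → Y} {p : G × H} :
    p ∈ intertwiningPairs G H f ↔ Function.Semiconj f (p.1 • ·) (p.2 • ·) :=
  Iff.rfl

theorem mem_intertwinerSubgroup_iff {f : X → Y} {g : G} :
    g ∈ intertwinerSubgroup G H f ↔ ∃ h : H, Function.Semiconj f (g • ·) (h • ·) := by
  simp [intertwinerSubgroup, mem_intertwiningPairs_iff]

end GroupAction

section MatrixAction

open scoped Matrix.Module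

variable {ι κ R S : Type*} [Fintype ι] [DecidableEq ι] [Fintype κ] [DecidableEq κ] [Ring S]

/-- The invertible matrices `A` with `f ∘ A = B ∘ f` for some invertible `B`, where `f` is an
arbitrary map; `Intertwiner σ n` is the case of the coordinatewise map `actCoord σ n`. -/
def matrixIntertwiners [Ring R] (f : (ι → R) → κ → S) : Set (Matrix ι ι R) :=
  {A | IsUnit A ∧ ∃ B : Matrix κ κ S, IsUnit B ∧ ∀ x, f (A *ᵥ x) = B *ᵥ f x}

theorem matrixIntertwiners_eq_image [Ring R] (f : (ι → R) → κ → S) :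
    matrixIntertwiners f =
      Units.val '' (intertwinerSubgroup (GL ι R) (GL κ S) f : Set (GL ι R)) := by
  -- The action of `GL` on column vectors unfolds to `*ᵥ`, so `hgh` fits both descriptions.
  ext A
  constructor
  · rintro ⟨⟨g, rfl⟩, _, ⟨h, rfl⟩, hgh⟩
    exact ⟨g, mem_intertwinerSubgroup_iff.2 ⟨h, hgh⟩, rfl⟩
  · rintro ⟨g, hg, rfl⟩
    obtain ⟨h, hgh⟩ := mem_intertwinerSubgroup_iff.1 hg
    exact ⟨g.isUnit, h, h.isUnit, hgh⟩

theorem intertwiner_is_subgroup_general [CommRing R] (f : (ι → R) → κ → S) :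
    (1 : Matrix ι ι R) ∈ matrixIntertwiners f ∧
    ∀ A₁ A₂ : Matrix ι ι R,
      A₁ ∈ matrixIntertwiners f → A₂ ∈ matrixIntertwiners f →
      A₁ * A₂⁻¹ ∈ matrixIntertwiners f := by
  rw [matrixIntertwiners_eq_image]
  refine ⟨⟨1, one_mem _, Units.val_one⟩, ?_⟩
  rintro _ _ ⟨g₁, hg₁, rfl⟩ ⟨g₂, hg₂, rfl⟩
  exact ⟨g₁ * g₂⁻¹, mul_mem hg₁ (inv_mem hg₂), by rw [Units.val_mul, coe_units_inv]⟩

end MatrixAction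

/-- If `σ(I_n)` is invertible, then `G_{σ_n}` is a subgroup of `GL_n(ℝ)`: it contains the
identity and is closed under `A₁ * A₂⁻¹`. -/
theorem intertwiner_is_subgroup (σ : ℝ → ℝ) (n : ℕ) (hn : 0 < n)
    (hσI : IsUnit ((1 : Matrix (Fin n) (Fin n) ℝ).map σ)) :
    (1 : Matrix (Fin n) (Fin n) ℝ) ∈ Intertwiner σ n ∧
    ∀ A₁ A₂ : Matrix (Fin n) (Fin n) ℝ,
      A₁ ∈ Intertwiner σ n → A₂ ∈ Intertwiner σ n →
      A₁ * A₂⁻¹ ∈ Intertwiner σ n :=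
  intertwiner_is_subgroup_general (actCoord σ n)
end
end

section
/- Let σ : ℝ → ℝ be a function and n a positive natural number such that σ(I_n) is invertible, and define φ_σ(A) := σ(A)·σ(I_n)^{-1}. Then for every A ∈ G_{σ_n}, one has σ_n ∘ A = φ_σ(A) ∘ σ_n as functions ℝ^n → ℝ^n; that is, the unique B with σ_n ∘ A = B ∘ σ_n is B = σ(A)·σ(I_n)^{-1}. -/
open Matrix

noncomputable section

/-- `φ_σ(A) = σ(A) · σ(I_n)⁻¹`, where `σ` is applied entrywise. -/
def phiMap (σ : ℝ → ℝ) (n : ℕ) (A : Matrix (Fin n) (Fin n) ℝ) :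
    Matrix (Fin n) (Fin n) ℝ :=
  A.map σ * ((1 : Matrix (Fin n) (Fin n) ℝ).map σ)⁻¹

/-!
Evaluating `σ_n ∘ A = B ∘ σ_n` at the columns of a matrix `X` gives `σ(A X) = B · σ(X)`. For
`X = I_n` this reads `σ(A) = B · σ(I_n)`, which determines `B` as soon as `σ(I_n)` is invertible.
-/

/-- `B` intertwines the entrywise action of `σ` with `A`, that is, `σ_m ∘ A = B ∘ σ_n`. The
matrices may be rectangular and `σ` may change the scalars; for `σ : ℝ → ℝ` and index type `Fin n`
this is the relation between `A` and `B` in `Intertwiner σ n`. -/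
def Intertwines {R S m n : Type*} [NonUnitalNonAssocSemiring R] [NonUnitalNonAssocSemiring S]
    [Fintype n] (σ : R → S) (A : Matrix m n R) (B : Matrix m n S) : Prop :=
  ∀ x : n → R, σ ∘ (A *ᵥ x) = B *ᵥ (σ ∘ x)

namespace Intertwines

variable {R S m n : Type*} [Fintype n] {σ : R → S} {A : Matrix m n R} {B : Matrix m n S}

theorem map_mul {p : Type*} [NonUnitalNonAssocSemiring R] [NonUnitalNonAssocSemiring S]
    (h : Intertwines σ A B) (X : Matrix n p R) : (A * X).map σ = B * X.map σ := by
  ext i j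
  exact congrFun (h (X.col j)) i

theorem map_eq_mul_map_one [NonAssocSemiring R] [NonUnitalNonAssocSemiring S] [DecidableEq n]
    (h : Intertwines σ A B) : A.map σ = B * (1 : Matrix n n R).map σ := by
  simpa only [Matrix.mul_one] using h.map_mul (1 : Matrix n n R)

theorem eq_map_mul_inv_map_one [NonAssocSemiring R] [CommRing S] [DecidableEq n]
    (h : Intertwines σ A B) (hσ : IsUnit ((1 : Matrix n n R).map σ)) :
    B = A.map σ * ((1 : Matrix n n R).map σ)⁻¹ := by
  rw [h.map_eq_mul_map_one,
    mul_nonsing_inv_cancel_right _ _ ((isUnit_iff_isUnit_det _).mp hσ)]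

end Intertwines

theorem phi_intertwines_and_unique_general {R S m n : Type*} [NonAssocSemiring R] [CommRing S]
    [Fintype n] [DecidableEq n] {σ : R → S} (hσ : IsUnit ((1 : Matrix n n R).map σ))
    {A : Matrix m n R} (hA : ∃ B : Matrix m n S, Intertwines σ A B) :
    Intertwines σ A (A.map σ * ((1 : Matrix n n R).map σ)⁻¹) ∧
      ∀ B : Matrix m n S, Intertwines σ A B → B = A.map σ * ((1 : Matrix n n R).map σ)⁻¹ := by
  obtain ⟨B, hB⟩ := hA
  exact ⟨hB.eq_map_mul_inv_map_one hσ ▸ hB, fun _ hC => hC.eq_map_mul_inv_map_one hσ⟩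

/-- If `σ(I_n)` is invertible, then for every `A ∈ G_{σ_n}` one has
`σ_n ∘ A = φ_σ(A) ∘ σ_n`, and `φ_σ(A) = σ(A)·σ(I_n)⁻¹` is the unique matrix `B`
with `σ_n ∘ A = B ∘ σ_n`. -/
theorem phi_intertwines_and_unique (σ : ℝ → ℝ) (n : ℕ) (hn : 0 < n)
    (hσI : IsUnit ((1 : Matrix (Fin n) (Fin n) ℝ).map σ)) :
    ∀ A ∈ Intertwiner σ n,
      (∀ x : Fin n → ℝ,
        actCoord σ n (A.mulVec x) = (phiMap σ n A).mulVec (actCoord σ n x)) ∧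
      ∀ B : Matrix (Fin n) (Fin n) ℝ,
        (∀ x : Fin n → ℝ,
          actCoord σ n (A.mulVec x) = B.mulVec (actCoord σ n x)) →
        B = phiMap σ n A := by
  rintro A ⟨-, B, -, hB⟩
  exact phi_intertwines_and_unique_general hσI ⟨B, hB⟩
end
end

section
/- Let σ : ℝ → ℝ be non-constant, non-linear (there are no c, d ∈ ℝ with σ(x) = c·x + d for all x), and differentiable at every point of ℝ ∖ S for some finite set S ⊆ ℝ. Then for every n ≥ 1, every A ∈ G_{σ_n} is of the form A = P·D where P is an n×n permutation matrix and D is an invertible diagonal matrix; equivalently, every row of A has exactly one nonzero entry, and these nonzero entries lie in distinct columns. -/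
open Matrix

noncomputable section

/-!
Fix a row `i` of `A`. The intertwining relation writes `σ (∑ l, A i l * x l)` as a sum of functions
of the single coordinates `x l`. If two entries of the row were nonzero, varying the two
corresponding coordinates would give `σ (u + v) + σ 0 = σ u + σ v` for all `u` and `v`; so `σ - σ 0`
would be additive, hence linear since it is continuous at a point. Therefore every row of the
invertible matrix `A` has exactly one nonzero entry.
-/

/-- A monomial (generalized permutation) matrix: `A = P * D` with `P` the matrix of a
permutation `π`, `P e_j = e_{π j}`, and `D` diagonal with nonzero entries, given by its diagonal. -/
def IsMonomial {ι R : Type*} [DecidableEq ι] [Zero R] (A : Matrix ι ι R) : Prop :=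
  ∃ (π : Equiv.Perm ι) (D : ι → R), (∀ j, D j ≠ 0) ∧ ∀ i j, A i j = if i = π j then D j else 0

lemma isMonomial_of_existsUnique_row_ne_zero {ι R : Type*} [DecidableEq ι] [Finite ι] [Zero R]
    {A : Matrix ι ι R} (hrow : ∀ i, ∃! j, A i j ≠ 0) (hcol : ∀ j, ∃ i, A i j ≠ 0) :
    IsMonomial A := by
  choose pivot hpivot hunique using hrow
  have hsurj : Function.Surjective pivot := fun j =>
    let ⟨i, hij⟩ := hcol j
    ⟨i, (hunique i j hij).symm⟩
  let e : Equiv.Perm ι := Equiv.ofBijective pivot (Finite.surjective_iff_bijective.mp hsurj)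
  refine ⟨e.symm, fun j => A (e.symm j) j, fun j => ?_, fun i j => ?_⟩
  · simpa only [show pivot (e.symm j) = j from e.apply_symm_apply j] using hpivot (e.symm j)
  · split_ifs with hij
    · rw [hij]
    · by_contra hne
      exact hij (e.eq_symm_apply.mpr (hunique i j hne).symm)

lemma exists_entry_ne_zero_of_mul_eq_one {m n R : Type*} [DecidableEq m] [Fintype n]
    [NonAssocSemiring R] [Nontrivial R] {A : Matrix m n R} {B : Matrix n m R}
    (h : A * B = 1) (i : m) : ∃ j, A i j ≠ 0 ∧ B j i ≠ 0 := by
  have hsum : ∑ j, A i j * B j i ≠ 0 := by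
    rw [← Matrix.mul_apply, h, Matrix.one_apply_eq]
    exact one_ne_zero
  obtain ⟨j, -, hj⟩ := Finset.exists_ne_zero_of_sum_ne_zero hsum
  exact ⟨j, left_ne_zero_of_mul hj, right_ne_zero_of_mul hj⟩

lemma sum_apply_single_add_single {ι M N : Type*} [Fintype ι] [DecidableEq ι] [AddZeroClass M]
    [AddCommMonoid N] (φ : ι → M → N) {j k : ι} (hjk : j ≠ k) (s t : M) :
    ∑ l, φ l ((Pi.single j s + Pi.single k t : ι → M) l) + ∑ l, φ l ((0 : ι → M) l) =
      ∑ l, φ l ((Pi.single j s : ι → M) l) + ∑ l, φ l ((Pi.single k t : ι → M) l) := by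
  rw [← Finset.sum_add_distrib, ← Finset.sum_add_distrib]
  refine Finset.sum_congr rfl fun l _ => ?_
  obtain rfl | hlj := eq_or_ne l j
  · simp only [Pi.add_apply, Pi.zero_apply, Pi.single_eq_of_ne hjk, add_zero]
  · simp only [Pi.add_apply, Pi.zero_apply, Pi.single_eq_of_ne hlj, zero_add, add_comm]

lemma map_add_add_map_zero_of_dotProduct_eq_sum {ι K N : Type*} [Fintype ι] [DivisionRing K]
    [AddCommMonoid N] {σ : K → N} {a : ι → K} {φ : ι → K → N}
    (h : ∀ x, σ (a ⬝ᵥ x) = ∑ l, φ l (x l)) {j k : ι} (hjk : j ≠ k) (hj : a j ≠ 0) (hk : a k ≠ 0)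
    (u v : K) : σ (u + v) + σ 0 = σ u + σ v := by
  classical
  have hsplit := sum_apply_single_add_single φ hjk ((a j)⁻¹ * u) ((a k)⁻¹ * v)
  rwa [← h, ← h, ← h, ← h, dotProduct_zero, dotProduct_add, dotProduct_single, dotProduct_single,
    mul_inv_cancel_left₀ hj, mul_inv_cancel_left₀ hk] at hsplit

lemma exists_continuousLinearMap_of_map_add {E F : Type*}
    [AddCommGroup E] [Module ℝ E] [TopologicalSpace E] [IsTopologicalAddGroup E]
    [ContinuousSMul ℝ E] [AddCommGroup F] [Module ℝ F] [TopologicalSpace F]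
    [IsTopologicalAddGroup F] [ContinuousSMul ℝ F] [T2Space F] {σ : E → F} {x₀ : E}
    (hσ : ContinuousAt σ x₀) (hadd : ∀ u v, σ (u + v) + σ 0 = σ u + σ v) :
    ∃ L : E →L[ℝ] F, ∀ x, σ x = L x + σ 0 := by
  let g : E →+ F := AddMonoidHom.mk' (fun x => σ x - σ 0) fun u v => by
    rw [eq_sub_of_add_eq (hadd u v)]
    abel
  have hg_shift : (g : E → F) = fun t => σ (x₀ + t) - σ x₀ := by
    funext t
    rw [eq_sub_of_add_eq (hadd x₀ t)]
    change σ t - σ 0 = _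
    abel
  have hg_zero : ContinuousAt g 0 := by
    rw [hg_shift]
    refine ContinuousAt.sub (ContinuousAt.comp ?_ ?_) continuousAt_const
    · simpa only [add_zero] using hσ
    · exact (continuous_const_add x₀).continuousAt
  exact ⟨g.toRealLinearMap (continuous_of_continuousAt_zero g hg_zero),
    fun x => (sub_add_cancel (σ x) (σ 0)).symm⟩

lemma exists_eq_mul_add_of_map_add {σ : ℝ → ℝ} {x₀ : ℝ} (hσ : ContinuousAt σ x₀)
    (hadd : ∀ u v, σ (u + v) + σ 0 = σ u + σ v) : ∃ c d : ℝ, ∀ x, σ x = c * x + d := by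
  obtain ⟨L, hL⟩ := exists_continuousLinearMap_of_map_add hσ hadd
  refine ⟨L 1, σ 0, fun x => ?_⟩
  rw [hL, mul_comm, ← smul_eq_mul, ← L.map_smul, smul_eq_mul, mul_one]

theorem intertwiner_struct_general {ι K R : Type*} [Fintype ι] [DecidableEq ι] [DivisionRing K]
    [NonUnitalNonAssocSemiring R] {σ : K → R}
    (hσ : ¬ ∀ u v, σ (u + v) + σ 0 = σ u + σ v) {A : Matrix ι ι K} (hA : IsUnit A)
    {B : Matrix ι ι R} (hAB : ∀ x, σ ∘ (A *ᵥ x) = B *ᵥ (σ ∘ x)) : IsMonomial A := by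
  obtain ⟨C, hAC, hCA⟩ := isUnit_iff_exists.mp hA
  refine isMonomial_of_existsUnique_row_ne_zero (fun i => ?_) fun j =>
    (exists_entry_ne_zero_of_mul_eq_one hCA j).imp fun _ => And.right
  obtain ⟨j, hj, -⟩ := exists_entry_ne_zero_of_mul_eq_one hAC i
  refine ⟨j, hj, fun k hk => ?_⟩
  by_contra hkj
  exact hσ (map_add_add_map_zero_of_dotProduct_eq_sum (φ := fun l y => B i l * σ y)
    (fun x => congrFun (hAB x) i) hkj hk hj)

/-- If `σ` is non-constant, non-linear, and differentiable away from a finite set, then every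
`A ∈ G_{σ_n}` is of the form `P·D` with `P` a permutation matrix and `D` an invertible
diagonal matrix: i.e. `A i j = if i = π j then D j else 0` with all `D j ≠ 0`. -/
theorem intertwiner_struct (σ : ℝ → ℝ)
    (hnc : ¬ ∃ c : ℝ, ∀ x : ℝ, σ x = c)
    (hnl : ¬ ∃ c d : ℝ, ∀ x : ℝ, σ x = c * x + d)
    (S : Set ℝ) (hS : S.Finite)
    (hdiff : ∀ x : ℝ, x ∉ S → DifferentiableAt ℝ σ x)
    (n : ℕ) (hn : 1 ≤ n)
    (A : Matrix (Fin n) (Fin n) ℝ) (hA : A ∈ Intertwiner σ n) :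
    ∃ (π : Equiv.Perm (Fin n)) (D : Fin n → ℝ),
      (∀ j, D j ≠ 0) ∧ ∀ i j, A i j = if i = π j then D j else 0 := by
  obtain ⟨hA, B, -, hAB⟩ := hA
  obtain ⟨x₀, hx₀⟩ := hS.exists_notMem
  exact intertwiner_struct_general
    (fun hadd => hnl (exists_eq_mul_add_of_map_add (hdiff x₀ hx₀).continuousAt hadd)) hA hAB
end
end

section
/- Let σ : ℝ → ℝ be non-constant, non-linear (there are no c, d ∈ ℝ with σ(x) = c·x + d for all x), and differentiable at every point of ℝ ∖ S for some finite set S ⊆ ℝ. If D = diag(λ_1,…,λ_n) is an invertible diagonal matrix with D ∈ G_{σ_n}, then there exist real numbers μ_1,…,μ_n, all nonzero, such that σ(λ_i·x) = μ_i·σ(x) for all x ∈ ℝ and all i (so each λ_i ∈ G_{σ_1}), and σ_n ∘ D = diag(μ_1,…,μ_n) ∘ σ_n. -/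
open Matrix

noncomputable section

theorem actCoord_eq_comp (σ : ℝ → ℝ) (n : ℕ) (x : Fin n → ℝ) : actCoord σ n x = σ ∘ x := rfl

section Coordinatewise

variable {ι α R : Type*}

theorem comp_update_sub_comp [DecidableEq ι] [AddGroup R] (σ : α → R) (x : ι → α) (j : ι) (a : α) :
    σ ∘ Function.update x j a - σ ∘ x = Pi.single j (σ a - σ (x j)) := by
  ext k
  obtain rfl | hk := eq_or_ne k j <;> simp [*]

variable [Fintype ι]

theorem diagonal_mulVec_eq_piMap [DecidableEq ι] [NonUnitalNonAssocSemiring R] (l x : ι → R) :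
    diagonal l *ᵥ x = Pi.map (fun i ↦ (l i * ·)) x :=
  funext fun i ↦ mulVec_diagonal l x i

/-- Changing only `x j` leaves the `i`-th entry of the image fixed when `i ≠ j`, but moves it by
`B i j * (σ a - σ b)`. -/
theorem isDiag_of_apply_eq_mulVec_comp [NonUnitalNonAssocRing R] [NoZeroDivisors R]
    {σ : α → R} {a b : α} (hσ : σ a ≠ σ b) {g : ι → α → R} {B : Matrix ι ι R}
    (h : ∀ x i, g i (x i) = (B *ᵥ (σ ∘ x)) i) : B.IsDiag := by
  classical
  intro i j hij
  let x : ι → α := fun _ ↦ b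
  have hentry : B i j * (σ a - σ b) = 0 := calc
    B i j * (σ a - σ b) = (B *ᵥ (σ ∘ Function.update x j a - σ ∘ x)) i := by
      simp [comp_update_sub_comp, x]
    _ = g i (Function.update x j a i) - g i (x i) := by rw [mulVec_sub, Pi.sub_apply, h, h]
    _ = 0 := by rw [Function.update_of_ne hij, sub_self]
  exact (mul_eq_zero.mp hentry).resolve_right (sub_ne_zero.mpr hσ)

theorem intertwiner_diagonal_struct_general [DecidableEq ι] [CommRing R] [NoZeroDivisors R]
    {σ : α → R} {f : ι → α → α} {B : Matrix ι ι R} (hB : IsUnit B)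
    (h : ∀ x, σ ∘ Pi.map f x = B *ᵥ (σ ∘ x)) :
    ∃ μ : ι → R, (∀ i, IsUnit (μ i)) ∧ (∀ i a, σ (f i a) = μ i * σ a) ∧
      ∀ x, σ ∘ Pi.map f x = diagonal μ *ᵥ (σ ∘ x) := by
  by_cases hσ : ∃ a b, σ a ≠ σ b
  · obtain ⟨a, b, hab⟩ := hσ
    have hdiag : B.IsDiag :=
      isDiag_of_apply_eq_mulVec_comp hab (g := fun i ↦ σ ∘ f i) fun x i ↦ congrFun (h x) i
    rw [← hdiag.diagonal_diag] at hB h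
    refine ⟨B.diag, Pi.isUnit_iff.mp (isUnit_diagonal.mp hB), fun i a ↦ ?_, h⟩
    simpa [mulVec_diagonal] using congrFun (h fun _ ↦ a) i
  · -- For constant `σ` the matrix `B` need not be diagonal, but `σ ∘ f i = σ` already holds.
    push Not at hσ
    exact ⟨1, fun _ ↦ isUnit_one, fun i a ↦ by simp [hσ (f i a) a],
      fun x ↦ by ext i; simp [hσ (f i (x i)) (x i)]⟩

end Coordinatewise

/-- If `σ` is non-constant, non-linear, and differentiable away from a finite set, and the
invertible diagonal matrix `D = diag(λ₁,…,λ_n)` lies in `G_{σ_n}`, then there are nonzero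
reals `μ₁,…,μ_n` with `σ(λᵢ·x) = μᵢ·σ(x)` for all `x` (so each `λᵢ ∈ G_{σ_1}`), and
`σ_n ∘ D = diag(μ₁,…,μ_n) ∘ σ_n`. -/
theorem intertwiner_diagonal_struct (σ : ℝ → ℝ)
    (hnc : ¬ ∃ c : ℝ, ∀ x : ℝ, σ x = c)
    (hnl : ¬ ∃ c d : ℝ, ∀ x : ℝ, σ x = c * x + d)
    (S : Set ℝ) (hS : S.Finite)
    (hdiff : ∀ x : ℝ, x ∉ S → DifferentiableAt ℝ σ x)
    (n : ℕ) (hn : 0 < n)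
    (l : Fin n → ℝ) (hl : ∀ i, l i ≠ 0)
    (hD : Matrix.diagonal l ∈ Intertwiner σ n) :
    ∃ μ : Fin n → ℝ, (∀ i, μ i ≠ 0) ∧
      (∀ (i : Fin n) (x : ℝ), σ (l i * x) = μ i * σ x) ∧
      (∀ x : Fin n → ℝ,
        actCoord σ n ((Matrix.diagonal l).mulVec x) =
          (Matrix.diagonal μ).mulVec (actCoord σ n x)) := by
  obtain ⟨-, B, hB, h⟩ := hD
  simp only [actCoord_eq_comp, diagonal_mulVec_eq_piMap l, ← isUnit_iff_ne_zero] at h ⊢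
  exact intertwiner_diagonal_struct_general hB h
end
end

section
/- Let ReLU(x) = max(0, x) and let ReLU_n : ℝ^n → ℝ^n apply ReLU coordinatewise. An invertible n×n real matrix A belongs to G_{ReLU_n} (i.e., there exists B ∈ GL_n(ℝ) with ReLU_n ∘ A = B ∘ ReLU_n) if and only if A = P·D for some n×n permutation matrix P and some diagonal matrix D with strictly positive diagonal entries; moreover in that case ReLU_n ∘ A = A ∘ ReLU_n. -/
open Matrix

noncomputable section

/-- Coordinatewise application of `ReLU(x) = max 0 x` to vectors in `ℝ^n`. -/
def reluVec (n : ℕ) (x : Fin n → ℝ) : Fin n → ℝ := fun i => max 0 (x i)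

/-!
The intertwining relation says in particular that `(A x)⁺` depends only on `x⁺`, and this can be
exploited one row `v` of `A` at a time. Comparing `-eⱼ` with `0` shows `vⱼ ≥ 0`; comparing `eⱼ - eₖ`
with `eⱼ` shows `(vⱼ - vₖ)⁺ = vⱼ`, so `vⱼ = 0` or `vₖ = 0`. Hence each row has at most one nonzero
entry, which is positive, and invertibility forces these entries to be placed along a permutation.
Conversely, scaling by a nonnegative number commutes with taking positive parts.
-/

theorem posPart_single_sub_single {ι α : Type*} [DecidableEq ι] [AddCommGroup α] [Lattice α]
    [IsOrderedAddMonoid α] {j k : ι} (hjk : j ≠ k) {a b : α} (ha : 0 ≤ a) (hb : 0 ≤ b) :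
    (Pi.single j a - Pi.single k b : ι → α)⁺ = Pi.single j a := by
  ext i
  obtain rfl | hij := eq_or_ne i j
  · simp [hjk, ha]
  · obtain rfl | hik := eq_or_ne i k <;> simp [*]

theorem posPart_mul_of_nonneg {R : Type*} [Ring R] [LinearOrder R] [IsOrderedRing R] {a : R}
    (ha : 0 ≤ a) (b : R) : (a * b)⁺ = a * b⁺ := by
  simp only [posPart_def, mul_max_of_nonneg _ _ ha, mul_zero]

section Functional

variable {ι R : Type*} [Fintype ι] [Ring R] [LinearOrder R] [IsOrderedRing R] {v : ι → R}

theorem nonneg_of_posPart_dotProduct_factorsThrough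
    (h : (fun x : ι → R => (v ⬝ᵥ x)⁺).FactorsThrough (·⁺)) : 0 ≤ v := by
  classical
  intro j
  have posPart_eq : (Pi.single j (-1) : ι → R)⁺ = 0⁺ := by
    rw [posPart_zero, posPart_eq_zero, Pi.single_nonpos, neg_nonpos]
    exact zero_le_one
  simpa using h posPart_eq

theorem support_subsingleton_of_posPart_dotProduct_factorsThrough
    (h : (fun x : ι → R => (v ⬝ᵥ x)⁺).FactorsThrough (·⁺)) :
    (Function.support v).Subsingleton := by
  classical
  intro j hj k hk
  by_contra hjk
  have hv := nonneg_of_posPart_dotProduct_factorsThrough h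
  have posPart_eq : (Pi.single j 1 - Pi.single k 1 : ι → R)⁺ = (Pi.single j 1)⁺ := by
    rw [posPart_single_sub_single hjk zero_le_one zero_le_one,
      posPart_of_nonneg (Pi.single_nonneg.2 zero_le_one)]
  have posPart_sub : (v j - v k)⁺ = v j := by
    simpa [dotProduct_sub, posPart_of_nonneg (hv j)] using h posPart_eq
  have posPart_sub_pos : 0 < (v j - v k)⁺ := posPart_sub.symm ▸ (hv j).lt_of_ne' hj
  exact hk (sub_eq_self.1 ((posPart_eq_of_posPart_pos posPart_sub_pos).symm.trans posPart_sub))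

theorem posPart_dotProduct_of_support_subsingleton (hv : 0 ≤ v)
    (hsupp : (Function.support v).Subsingleton) (x : ι → R) : (v ⬝ᵥ x)⁺ = v ⬝ᵥ x⁺ := by
  classical
  obtain hempty | ⟨j, hj⟩ := hsupp.eq_empty_or_singleton
  · simp [Function.support_eq_empty_iff.1 hempty]
  · have v_eq : v = Pi.single j (v j) := by
      ext k
      obtain rfl | hk := eq_or_ne k j
      · rw [Pi.single_eq_same]
      · rw [Pi.single_eq_of_ne hk, ← Function.notMem_support, hj]
        exact hk
    rw [v_eq, single_dotProduct, single_dotProduct, posPart_mul_of_nonneg (hv j), Pi.posPart_apply]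

end Functional

theorem exists_perm_forall_ne_zero_iff_of_isUnit {ι R : Type*} [Fintype ι] [DecidableEq ι]
    [Semiring R] [Nontrivial R] {A : Matrix ι ι R} (hA : IsUnit A)
    (hrow : ∀ i, (Function.support (A i)).Subsingleton) :
    ∃ π : Equiv.Perm ι, ∀ i j, A i j ≠ 0 ↔ i = π j := by
  have exists_ne_zero_row (i : ι) : ∃ j, A i j ≠ 0 :=
    Function.ne_iff.1 ((linearIndependent_rows_of_isUnit hA).ne_zero i)
  have exists_ne_zero_col (j : ι) : ∃ i, A i j ≠ 0 := by
    have single_ne_zero : (Pi.single j 1 : ι → R) ≠ 0 := Pi.single_ne_zero_iff.2 one_ne_zero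
    have col_ne_zero : A.col j ≠ 0 := by
      simpa using (mulVec_injective_of_isUnit hA).ne single_ne_zero
    exact Function.ne_iff.1 col_ne_zero
  choose σ hσ using exists_ne_zero_row
  have ne_zero_iff (i j : ι) : A i j ≠ 0 ↔ σ i = j :=
    ⟨fun hij => hrow i (hσ i) hij, fun hij => hij ▸ hσ i⟩
  have surjective_σ : Function.Surjective σ := fun j =>
    (exists_ne_zero_col j).imp fun i => (ne_zero_iff i j).1
  let e := Equiv.ofBijective σ surjective_σ.bijective_of_finite
  exact ⟨e.symm, fun i j => (ne_zero_iff i j).trans e.eq_symm_apply.symm⟩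

section Matrix

variable {ι R : Type*} [Fintype ι] [DecidableEq ι] [Ring R] [LinearOrder R] [IsOrderedRing R]
  {A : Matrix ι ι R}

theorem exists_perm_pos_of_posPart_mulVec_factorsThrough [Nontrivial R] (hA : IsUnit A)
    (h : (fun x : ι → R => (A *ᵥ x)⁺).FactorsThrough (·⁺)) :
    ∃ (π : Equiv.Perm ι) (d : ι → R),
      (∀ j, 0 < d j) ∧ ∀ i j, A i j = if i = π j then d j else 0 := by
  have row_factorsThrough (i : ι) : (fun x : ι → R => (A i ⬝ᵥ x)⁺).FactorsThrough (·⁺) :=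
    fun _ _ hxy => congrFun (h hxy) i
  have A_nonneg (i : ι) : 0 ≤ A i :=
    nonneg_of_posPart_dotProduct_factorsThrough (row_factorsThrough i)
  obtain ⟨π, ne_zero_iff⟩ := exists_perm_forall_ne_zero_iff_of_isUnit hA fun i =>
    support_subsingleton_of_posPart_dotProduct_factorsThrough (row_factorsThrough i)
  refine ⟨π, fun j => A (π j) j, fun j => ?_, fun i j => ?_⟩
  · exact (A_nonneg (π j) j).lt_of_ne' ((ne_zero_iff _ j).2 rfl)
  · split_ifs with hij
    · rw [hij]
    · exact not_not.1 (mt (ne_zero_iff i j).1 hij)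

theorem posPart_mulVec_of_perm_nonneg (π : Equiv.Perm ι) {d : ι → R} (hd : ∀ j, 0 ≤ d j)
    (hA : ∀ i j, A i j = if i = π j then d j else 0) (x : ι → R) :
    (A *ᵥ x)⁺ = A *ᵥ x⁺ := by
  ext i
  refine posPart_dotProduct_of_support_subsingleton (fun j => ?_) (fun j hj k hk => ?_) x
  · rw [hA]
    split_ifs
    exacts [hd j, le_rfl]
  · simp only [Function.mem_support, hA, ne_eq, ite_eq_right_iff, Classical.not_imp] at hj hk
    exact π.injective (hj.1.symm.trans hk.1)

/-- The second condition says that `A` is intertwined with some map `B` that need not be linear. -/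
theorem relu_intertwiner_characterization_general [Nontrivial R] (hA : IsUnit A) :
    List.TFAE [
      ∃ B : Matrix ι ι R, IsUnit B ∧ ∀ x : ι → R, (A *ᵥ x)⁺ = B *ᵥ x⁺,
      (fun x : ι → R => (A *ᵥ x)⁺).FactorsThrough (·⁺),
      ∃ (π : Equiv.Perm ι) (d : ι → R),
        (∀ j, 0 < d j) ∧ ∀ i j, A i j = if i = π j then d j else 0,
      ∀ x : ι → R, (A *ᵥ x)⁺ = A *ᵥ x⁺] := by
  tfae_have 1 → 2 := fun ⟨B, _, hB⟩ x y hxy =>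
    (hB x).trans ((congrArg (B *ᵥ ·) hxy).trans (hB y).symm)
  tfae_have 2 → 3 := exists_perm_pos_of_posPart_mulVec_factorsThrough hA
  tfae_have 3 → 4 := fun ⟨π, _, hd, hπ⟩ =>
    posPart_mulVec_of_perm_nonneg π (fun j => (hd j).le) hπ
  tfae_have 4 → 1 := fun h => ⟨A, hA, h⟩
  tfae_finish

end Matrix

theorem reluVec_eq_posPart (n : ℕ) (x : Fin n → ℝ) : reluVec n x = x⁺ :=
  funext fun i => max_comm 0 (x i)

/-- An invertible `n × n` real matrix `A` lies in `G_{ReLU_n}` iff `A = P·D` for a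
permutation matrix `P` and a diagonal matrix `D` with strictly positive entries
(equivalently `A i j = if i = π j then d j else 0` with `d j > 0`); moreover in that case
`ReLU_n ∘ A = A ∘ ReLU_n`. -/
theorem relu_intertwiner_characterization (n : ℕ) (hn : 0 < n)
    (A : Matrix (Fin n) (Fin n) ℝ) (hA : IsUnit A) :
    ((∃ B : Matrix (Fin n) (Fin n) ℝ, IsUnit B ∧
        ∀ x : Fin n → ℝ, reluVec n (A.mulVec x) = B.mulVec (reluVec n x)) ↔
      ∃ (π : Equiv.Perm (Fin n)) (d : Fin n → ℝ),
        (∀ j, 0 < d j) ∧ ∀ i j, A i j = if i = π j then d j else 0) ∧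
    ((∃ B : Matrix (Fin n) (Fin n) ℝ, IsUnit B ∧
        ∀ x : Fin n → ℝ, reluVec n (A.mulVec x) = B.mulVec (reluVec n x)) →
      ∀ x : Fin n → ℝ, reluVec n (A.mulVec x) = A.mulVec (reluVec n x)) := by
  simp only [reluVec_eq_posPart]
  have h := relu_intertwiner_characterization_general hA
  exact ⟨h.out 0 2, (h.out 0 3).1⟩
end
end

section
/- Let v = (v_1,…,v_n) ∈ ℝ^n have at least two nonzero coordinates v_i ≠ 0 and v_j ≠ 0 with i ≠ j. Then any set of rays in ℝ^n that contains ℝ_{≥0}·v and is stabilized by every matrix of the form P·D (P an n×n permutation matrix, D diagonal with strictly positive entries) is infinite. Consequently, if ℝ_{≥0}·v_1, …, ℝ_{≥0}·v_N is a finite set of rays generated by nonzero vectors and stabilized by all such matrices, then each v_i has exactly one nonzero coordinate, i.e., up to multiplication by a positive scalar each v_i is of the form ±e_j for some j. -/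
open Matrix

noncomputable section

/-- The ray `ℝ_{≥0}·v ⊆ ℝ^n` generated by `v`. -/
def ray (n : ℕ) (v : Fin n → ℝ) : Set (Fin n → ℝ) :=
  {w | ∃ t : ℝ, 0 ≤ t ∧ w = t • v}

/-- `A` is of the form `P·D` with `P` a permutation matrix and `D` diagonal with strictly
positive entries, i.e. an element of `G_{ReLU_n}`. -/
def IsPermPosDiag (n : ℕ) (A : Matrix (Fin n) (Fin n) ℝ) : Prop :=
  ∃ (π : Equiv.Perm (Fin n)) (d : Fin n → ℝ),
    (∀ j, 0 < d j) ∧ ∀ i j, A i j = if i = π j then d j else 0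

/-!
Let `v i` and `v j` be nonzero with `i ≠ j`, multiply the `i`-th coordinate of `v` by `c > 0` and
keep all others. If two values of `c` give the same ray, then one of the resulting vectors is a
multiple of the other. The factor is `1`, because both have the same nonzero `j`-th coordinate, so
the `i`-th coordinates agree as well. Thus infinitely many `c` give infinitely many rays.
-/

section Hull

variable {R E F : Type*} [Semiring R] [PartialOrder R] [IsOrderedRing R]
  [AddCommMonoid E] [Module R E] [AddCommMonoid F] [Module R F]

theorem image_hull_singleton (f : E →ₗ[R] F) (v : E) :
    f '' (PointedCone.hull R {v} : Set E) = PointedCone.hull R {f v} := by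
  have hmap : PointedCone.map f (PointedCone.hull R {v}) = PointedCone.hull R {f v} :=
    (Submodule.map_span _ _).trans (congrArg _ Set.image_singleton)
  exact congrArg SetLike.coe hmap

theorem eq_of_mem_hull_singleton_of_apply_eq [IsRightCancelMulZero R] (f : E →ₗ[R] R) {v w : E}
    (hw : w ∈ PointedCone.hull R {v}) (hfv : f v ≠ 0) (hfw : f w = f v) : w = v := by
  obtain ⟨⟨t, ht₀⟩, rfl⟩ := Submodule.mem_span_singleton.mp hw
  obtain rfl : t = 1 :=
    mul_right_cancel₀ hfv (((f.map_smul t v).symm.trans hfw).trans (one_mul _).symm)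
  exact one_smul R v

end Hull

section PosDiag

variable {ι R : Type*} [CommSemiring R] [PartialOrder R]

theorem image_mul_hull_singleton [IsOrderedRing R] (d v : ι → R) :
    (d * ·) '' (PointedCone.hull R {v} : Set (ι → R)) = PointedCone.hull R {d * v} :=
  image_hull_singleton (LinearMap.mulLeft R d) v

theorem injective_hull_mulSingle_mul [IsOrderedRing R] [IsCancelMulZero R] [DecidableEq ι]
    {v : ι → R} {i j : ι} (hij : i ≠ j) (hi : v i ≠ 0) (hj : v j ≠ 0) :
    Function.Injective fun c : R ↦
      (PointedCone.hull R {Pi.mulSingle i c * v} : Set (ι → R)) := by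
  intro a b hab
  have hmem : Pi.mulSingle i a * v ∈ PointedCone.hull R {Pi.mulSingle i b * v} :=
    hab.subset (Submodule.mem_span_singleton_self _)
  have apply_j (c : R) : (Pi.mulSingle i c * v : ι → R) j = v j := by simp [hij.symm]
  have hvec : Pi.mulSingle i a * v = Pi.mulSingle i b * v :=
    eq_of_mem_hull_singleton_of_apply_eq (LinearMap.proj j) hmem ((apply_j b).trans_ne hj)
      ((apply_j a).trans (apply_j b).symm)
  exact mul_right_cancel₀ hi (by simpa using congrFun hvec i)

/-- A family of subsets of `R^ι` carried into itself by every diagonal matrix with positive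
diagonal entries. The matrix with diagonal `d` is encoded as pointwise multiplication by `d`, which
also makes sense for infinite `ι`. -/
def IsPosDiagInvariant {ι R : Type*} [Zero R] [Mul R] [LT R] (S : Set (Set (ι → R))) : Prop :=
  ∀ d : ι → R, (∀ k, 0 < d k) → ∀ r ∈ S, (d * ·) '' r ∈ S

namespace IsPosDiagInvariant

variable [IsStrictOrderedRing R] [IsCancelMulZero R] {S : Set (Set (ι → R))}

theorem infinite_of_hull_mem (hS : IsPosDiagInvariant S) {v : ι → R} {i j : ι} (hij : i ≠ j)
    (hi : v i ≠ 0) (hj : v j ≠ 0) (hv : (PointedCone.hull R {v} : Set (ι → R)) ∈ S) :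
    S.Infinite := by
  classical
  refine ((Set.Ioi_infinite (0 : R)).image
    (injective_hull_mulSingle_mul hij hi hj).injOn).mono ?_
  rintro _ ⟨c, hc, rfl⟩
  have hpos : ∀ k, 0 < (Pi.mulSingle i c : ι → R) k :=
    (Function.forall_update_iff _ fun _ x ↦ 0 < x).mpr ⟨hc, fun _ _ ↦ one_pos⟩
  simpa only [image_mul_hull_singleton] using hS _ hpos _ hv

theorem exists_forall_ne_apply_eq_zero (hS : IsPosDiagInvariant S) (hfin : S.Finite) {v : ι → R}
    (hv₀ : v ≠ 0) (hv : (PointedCone.hull R {v} : Set (ι → R)) ∈ S) :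
    ∃ j₀, v j₀ ≠ 0 ∧ ∀ j, j ≠ j₀ → v j = 0 := by
  obtain ⟨j₀, hj₀⟩ := Function.ne_iff.mp hv₀
  refine ⟨j₀, hj₀, fun j hj ↦ ?_⟩
  by_contra hvj
  exact hS.infinite_of_hull_mem hj hvj hj₀ hv hfin

end IsPosDiagInvariant

end PosDiag

theorem ray_eq_hull_singleton {n : ℕ} (v : Fin n → ℝ) : ray n v = PointedCone.hull ℝ {v} := by
  ext w
  constructor
  · rintro ⟨t, ht, rfl⟩
    exact Submodule.mem_span_singleton.mpr ⟨⟨t, ht⟩, rfl⟩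
  · intro hw
    obtain ⟨⟨t, ht⟩, rfl⟩ := Submodule.mem_span_singleton.mp hw
    exact ⟨t, ht, rfl⟩

theorem isPermPosDiag_diagonal {n : ℕ} {d : Fin n → ℝ} (hd : ∀ k, 0 < d k) :
    IsPermPosDiag n (diagonal d) :=
  ⟨1, d, hd, fun i j ↦ by by_cases h : i = j <;> simp [h]⟩

theorem isPosDiagInvariant_of_image_mulVec_eq {n : ℕ} {S : Set (Set (Fin n → ℝ))}
    (hS : ∀ A : Matrix (Fin n) (Fin n) ℝ, IsPermPosDiag n A →
      (fun r ↦ (fun w ↦ A.mulVec w) '' r) '' S = S) : IsPosDiagInvariant S := by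
  intro d hd r hr
  have hmul : (fun w ↦ (diagonal d).mulVec w) = (d * ·) := by
    ext w k
    exact mulVec_diagonal d w k
  rw [← hmul, ← hS _ (isPermPosDiag_diagonal hd)]
  exact Set.mem_image_of_mem _ hr

theorem rays_with_two_nonzero_coords_general {ι R : Type*} [CommSemiring R] [PartialOrder R]
    [IsStrictOrderedRing R] [IsCancelMulZero R] {S : Set (Set (ι → R))}
    (hS : IsPosDiagInvariant S) :
    (∀ (v : ι → R) (i j : ι), i ≠ j → v i ≠ 0 → v j ≠ 0 →
      (PointedCone.hull R {v} : Set (ι → R)) ∈ S → S.Infinite) ∧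
    (S.Finite → ∀ v : ι → R, v ≠ 0 → (PointedCone.hull R {v} : Set (ι → R)) ∈ S →
      ∃ j₀, v j₀ ≠ 0 ∧ ∀ j, j ≠ j₀ → v j = 0) :=
  ⟨fun _ _ _ hij hi hj hv ↦ hS.infinite_of_hull_mem hij hi hj hv,
    fun hfin _ hv₀ hv ↦ hS.exists_forall_ne_apply_eq_zero hfin hv₀ hv⟩

/-- If `v ∈ ℝ^n` has at least two nonzero coordinates, then any set of rays containing
`ℝ_{≥0}·v` and stabilized by every `P·D` (permutation times positive diagonal) is infinite.
Consequently, a finite family of rays generated by nonzero vectors and stabilized by all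
such matrices consists only of rays generated by vectors having exactly one nonzero
coordinate. -/
theorem rays_with_two_nonzero_coords (n : ℕ) :
    (∀ (v : Fin n → ℝ) (i j : Fin n), i ≠ j → v i ≠ 0 → v j ≠ 0 →
      ∀ S : Set (Set (Fin n → ℝ)), ray n v ∈ S →
        (∀ A : Matrix (Fin n) (Fin n) ℝ, IsPermPosDiag n A →
          (fun r => (fun w => A.mulVec w) '' r) '' S = S) →
        S.Infinite) ∧
    (∀ (N : ℕ) (u : Fin N → (Fin n → ℝ)), (∀ k, u k ≠ 0) →
      (∀ A : Matrix (Fin n) (Fin n) ℝ, IsPermPosDiag n A →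
        (fun r => (fun w => A.mulVec w) '' r) '' {r | ∃ k, r = ray n (u k)} =
          {r | ∃ k, r = ray n (u k)}) →
      ∀ k, ∃ j₀ : Fin n, u k j₀ ≠ 0 ∧ ∀ j, j ≠ j₀ → u k j = 0) := by
  have finite_rays {N : ℕ} (u : Fin N → Fin n → ℝ) : {r | ∃ k, r = ray n (u k)}.Finite := by
    simpa only [Set.range, eq_comm] using Set.finite_range fun k ↦ ray n (u k)
  exact ⟨fun v i j hij hi hj S hv hS ↦
      (rays_with_two_nonzero_coords_general (isPosDiagInvariant_of_image_mulVec_eq hS)).1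
        v i j hij hi hj (ray_eq_hull_singleton v ▸ hv),
    fun N u hu hS k ↦
      (rays_with_two_nonzero_coords_general (isPosDiagInvariant_of_image_mulVec_eq hS)).2
        (finite_rays u) (u k) (hu k) (ray_eq_hull_singleton (u k) ▸ ⟨k, rfl⟩)⟩
end
end

section
/- Fix s ∈ ℝ with 0 < s < 1 and define LeakyReLU_s(x) := s·x + (1−s)·max(0, x). If a, b ∈ ℝ with a ≠ 0 satisfy LeakyReLU_s(a·x) = b·LeakyReLU_s(x) for all x ∈ ℝ, then a > 0 and b = a. -/
section LeakyReLU

variable {R : Type*}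

/-- The leaky rectified linear unit with negative slope `s`. The slope is unrestricted, so that
`s = 0` gives ReLU and `s = -1` the absolute value. -/
def leakyReLU [Ring R] [LinearOrder R] (s x : R) : R :=
  s * x + (1 - s) * max 0 x

theorem leakyReLU_of_nonneg [Ring R] [LinearOrder R] (s : R) {x : R} (hx : 0 ≤ x) :
    leakyReLU s x = x := by
  rw [leakyReLU, max_eq_right hx, ← add_mul, add_sub_cancel, one_mul]

theorem leakyReLU_of_nonpos [Ring R] [LinearOrder R] (s : R) {x : R} (hx : x ≤ 0) :
    leakyReLU s x = s * x := by
  rw [leakyReLU, max_eq_left hx, mul_zero, add_zero]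

theorem leakyReLU_semiconj_apply_one [Ring R] [LinearOrder R] [ZeroLEOneClass R] {s a b : R}
    (h : Function.Semiconj (leakyReLU s) (a * ·) (b * ·)) : leakyReLU s a = b := by
  simpa only [mul_one, leakyReLU_of_nonneg s zero_le_one] using h 1

theorem eq_of_leakyReLU_semiconj_of_nonneg [Ring R] [LinearOrder R] [ZeroLEOneClass R]
    {s a b : R} (ha : 0 ≤ a) (h : Function.Semiconj (leakyReLU s) (a * ·) (b * ·)) : b = a := by
  rw [← leakyReLU_semiconj_apply_one h, leakyReLU_of_nonneg s ha]

variable [CommRing R] [LinearOrder R] [IsStrictOrderedRing R] {s a b : R}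

-- A negative dilation exchanges the two half-lines, so comparing slopes on either side picks up
-- one factor `s` each.
theorem sq_eq_one_of_leakyReLU_semiconj_of_neg (ha : a < 0)
    (h : Function.Semiconj (leakyReLU s) (a * ·) (b * ·)) : s ^ 2 = 1 := by
  have at_one : s * a = b := by
    rw [← leakyReLU_semiconj_apply_one h, leakyReLU_of_nonpos s ha.le]
  have at_neg_one : a = b * s := by
    simpa only [mul_neg, mul_one, neg_inj, leakyReLU_of_nonneg s (neg_nonneg.2 ha.le),
      leakyReLU_of_nonpos s (neg_nonpos.2 zero_le_one)] using h (-1)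
  refine mul_right_cancel₀ ha.ne ?_
  calc
    s ^ 2 * a = s * a * s := by ring
    _ = b * s := by rw [at_one]
    _ = 1 * a := by rw [← at_neg_one, one_mul]

theorem leakyrelu_one_dim_intertwiner_general (hs : s ^ 2 ≠ 1)
    (h : Function.Semiconj (leakyReLU s) (a * ·) (b * ·)) : 0 ≤ a ∧ b = a := by
  have ha : 0 ≤ a := not_lt.1 fun hneg => hs (sq_eq_one_of_leakyReLU_semiconj_of_neg hneg h)
  exact ⟨ha, eq_of_leakyReLU_semiconj_of_nonneg ha h⟩

end LeakyReLU

/-- The one-dimensional intertwiner group of `LeakyReLU` with negative slope `0 < s < 1`: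
if `a ≠ 0` and `LeakyReLU_s(a·x) = b·LeakyReLU_s(x)` for all `x`, then `a > 0` and `b = a`,
where `LeakyReLU_s(x) = s·x + (1−s)·max 0 x`. -/
theorem leakyrelu_one_dim_intertwiner (s : ℝ) (hs0 : 0 < s) (hs1 : s < 1)
    (a b : ℝ) (ha : a ≠ 0)
    (h : ∀ x : ℝ, s * (a * x) + (1 - s) * max 0 (a * x) =
      b * (s * x + (1 - s) * max 0 x)) :
    0 < a ∧ b = a :=
  (leakyrelu_one_dim_intertwiner_general (pow_lt_one₀ hs0.le hs1 two_ne_zero).ne h).imp_left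
    ha.symm.lt_of_le
end

section
/- Let σ(x) = exp(x)/(1 + exp(x)) be the sigmoid function. If a, b ∈ ℝ satisfy σ(a·x) = b·σ(x) for all x ∈ ℝ, then a = 1 and b = 1. -/
theorem eq_one_and_eq_one_of_forall_mem_map_mul_eq_mul_map {M N : Type*}
    [MulZeroOneClass M] [IsRightCancelMulZero M] [MulZeroOneClass N] [IsRightCancelMulZero N]
    {f : M → N} (hf : Function.Injective f) (hf₀ : f 0 ≠ 0)
    {s : Set M} (hs₀ : 0 ∈ s) (hs : s.Nontrivial) {a : M} {b : N}
    (h : ∀ x ∈ s, f (a * x) = b * f x) : a = 1 ∧ b = 1 := by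
  have hb : b = 1 := by
    have h_zero : b * f 0 = 1 * f 0 := by rw [← h 0 hs₀, mul_zero, one_mul]
    exact mul_right_cancel₀ hf₀ h_zero
  obtain ⟨x, hxs, hx⟩ := hs.exists_ne 0
  have hax : a * x = 1 * x := hf (by rw [h x hxs, hb, one_mul, one_mul])
  exact ⟨mul_right_cancel₀ hx hax, hb⟩

theorem exp_div_one_add_exp_eq_sigmoid (x : ℝ) :
    Real.exp x / (1 + Real.exp x) = Real.sigmoid x := by
  rw [Real.sigmoid_def, Real.exp_neg]
  field_simp
  ring

theorem sigmoid_one_dim_intertwiner_general {s : Set ℝ} (hs₀ : 0 ∈ s) (hs : s.Nontrivial)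
    {a b : ℝ} (h : ∀ x ∈ s, Real.sigmoid (a * x) = b * Real.sigmoid x) :
    a = 1 ∧ b = 1 :=
  eq_one_and_eq_one_of_forall_mem_map_mul_eq_mul_map Real.sigmoid_injective
    (Real.sigmoid_pos 0).ne' hs₀ hs h

/-- The one-dimensional intertwiner group of the sigmoid `σ(x) = eˣ/(1+eˣ)`:
if `σ(a·x) = b·σ(x)` for all `x`, then `a = 1` and `b = 1`. -/
theorem sigmoid_one_dim_intertwiner (a b : ℝ)
    (h : ∀ x : ℝ,
      Real.exp (a * x) / (1 + Real.exp (a * x)) =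
        b * (Real.exp x / (1 + Real.exp x))) :
    a = 1 ∧ b = 1 := by
  simp only [exp_div_one_add_exp_eq_sigmoid] at h
  exact sigmoid_one_dim_intertwiner_general (Set.mem_univ 0) Set.nontrivial_univ fun x _ ↦ h x
end

section
/- Fix k ≥ 1, dimensions n_0,…,n_k ≥ 1, a function σ : ℝ → ℝ with σ(I_{n_i}) invertible for 1 ≤ i ≤ k−1, weights W_i ∈ ℝ^{n_i×n_{i−1}} and biases b_i ∈ ℝ^{n_i}. Define layers ℓ_i(x) = σ_{n_i}(W_i·x + b_i) for 1 ≤ i < k and ℓ_k(x) = W_k·x + b_k; set f_{≤m} := ℓ_m ∘ ⋯ ∘ ℓ_1 and f_{>m} := ℓ_k ∘ ⋯ ∘ ℓ_{m+1}, and f := ℓ_k ∘ ⋯ ∘ ℓ_1. Given A_i ∈ G_{σ_{n_i}} for 1 ≤ i ≤ k−1, define transformed weights W'_1 := A_1·W_1, b'_i := A_i·b_i for 1 ≤ i ≤ k−1, W'_i := A_i·W_i·φ_σ(A_{i−1})^{−1} for 2 ≤ i ≤ k−1, W'_k := W_k·φ_σ(A_{k−1})^{−1}, b'_k := b_k, and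 let f'_{≤m}, f'_{>m}, f' denote the corresponding compositions with the primed weights. Then for each 1 ≤ m ≤ k−1: f'_{≤m}(x) = φ_σ(A_m)·f_{≤m}(x) and f'_{>m}(x) = f_{>m}(φ_σ(A_m)^{−1}·x) for all x; in particular f'(x) = f(x) for all x ∈ ℝ^{n_0}. -/
open Matrix

noncomputable section

/-- `fwdHidden σ n W b m = f_{≤ m}`: the composition of the first `m` activated layers
`ℓ_m ∘ ⋯ ∘ ℓ_1`, where (0-indexed) `ℓ_{i+1}(x) = σ_{n (i+1)}(W i · x + b i)`. -/
def fwdHidden (σ : ℝ → ℝ) (n : ℕ → ℕ)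
    (W : ∀ i : ℕ, Matrix (Fin (n (i + 1))) (Fin (n i)) ℝ)
    (b : ∀ i : ℕ, Fin (n (i + 1)) → ℝ) :
    ∀ m : ℕ, (Fin (n 0) → ℝ) → (Fin (n m) → ℝ)
  | 0 => id
  | (m + 1) => fun x => fun i => σ (((W m).mulVec (fwdHidden σ n W b m x) + b m) i)

/-- `seg σ n W b m j`: the composition of the `j` activated layers `ℓ_{m+j} ∘ ⋯ ∘ ℓ_{m+1}`,
taking inputs at layer `m`. -/
def seg (σ : ℝ → ℝ) (n : ℕ → ℕ)
    (W : ∀ i : ℕ, Matrix (Fin (n (i + 1))) (Fin (n i)) ℝ)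
    (b : ∀ i : ℕ, Fin (n (i + 1)) → ℝ) (m : ℕ) :
    ∀ j : ℕ, (Fin (n m) → ℝ) → (Fin (n (m + j)) → ℝ)
  | 0 => id
  | (j + 1) => fun x => fun i =>
      σ (((W (m + j)).mulVec (seg σ n W b m j x) + b (m + j)) i)

/-!
Evaluating `σ_n ∘ A = B ∘ σ_n` on the standard basis vectors gives `σ(A) = B · σ(I_n)` column by
column, so `B = φ_σ(A)`. Multiplying `W` and `b` on the left by `A` therefore multiplies the output
of a layer by `φ_σ(A)`, and the factor `φ_σ(A)⁻¹` on the right of the next weight absorbs this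
change. Thus consecutive layers are semiconjugated by the matrices `φ_σ(A_i)`, and these
semiconjugacies compose.
-/

/-- The activated layer `ℓ(x) = σ(W · x + b)`, for weights of an arbitrary shape. -/
def layer (σ : ℝ → ℝ) {p q : ℕ} (W : Matrix (Fin q) (Fin p) ℝ) (b : Fin q → ℝ)
    (x : Fin p → ℝ) : Fin q → ℝ :=
  actCoord σ q (W *ᵥ x + b)

theorem mul_inv_mulVec_mulVec {R ι κ : Type*} [CommRing R] [Fintype κ] [DecidableEq κ]
    {P : Matrix κ κ R} (hP : IsUnit P) (W : Matrix ι κ R) (x : κ → R) :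
    (W * P⁻¹) *ᵥ (P *ᵥ x) = W *ᵥ x := by
  rw [mulVec_mulVec, nonsing_inv_mul_cancel_right _ _ ((isUnit_iff_isUnit_det _).1 hP)]

theorem mulVec_inv_mulVec {R κ : Type*} [CommRing R] [Fintype κ] [DecidableEq κ]
    {P : Matrix κ κ R} (hP : IsUnit P) (x : κ → R) : P *ᵥ (P⁻¹ *ᵥ x) = x := by
  rw [mulVec_mulVec, mul_nonsing_inv _ ((isUnit_iff_isUnit_det _).1 hP), one_mulVec]

section Intertwiners

variable {σ : ℝ → ℝ}

theorem map_eq_mul_map_one_of_intertwines {p q : ℕ} {A B : Matrix (Fin q) (Fin p) ℝ}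
    (h : ∀ x, actCoord σ q (A *ᵥ x) = B *ᵥ actCoord σ p x) :
    A.map σ = B * (1 : Matrix (Fin p) (Fin p) ℝ).map σ := by
  refine ext_col fun j => ?_
  calc (A.map σ).col j = actCoord σ q (A *ᵥ Pi.single j 1) := by rw [mulVec_single_one]; rfl
    _ = B *ᵥ actCoord σ p ((1 : Matrix (Fin p) (Fin p) ℝ) *ᵥ Pi.single j 1) := by
      rw [h, one_mulVec]
    _ = (B * (1 : Matrix (Fin p) (Fin p) ℝ).map σ).col j := by rw [mulVec_single_one]; rfl

variable {q : ℕ} {A : Matrix (Fin q) (Fin q) ℝ}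

theorem phiMap_eq_of_intertwines {B : Matrix (Fin q) (Fin q) ℝ}
    (hσ : IsUnit ((1 : Matrix (Fin q) (Fin q) ℝ).map σ))
    (h : ∀ x, actCoord σ q (A *ᵥ x) = B *ᵥ actCoord σ q x) : phiMap σ q A = B := by
  rw [phiMap, map_eq_mul_map_one_of_intertwines h,
    mul_nonsing_inv_cancel_right _ _ ((isUnit_iff_isUnit_det _).1 hσ)]

theorem isUnit_phiMap (hσ : IsUnit ((1 : Matrix (Fin q) (Fin q) ℝ).map σ))
    (hA : A ∈ Intertwiner σ q) : IsUnit (phiMap σ q A) := by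
  obtain ⟨-, B, hB, h⟩ := hA
  rwa [phiMap_eq_of_intertwines hσ h]

theorem actCoord_mulVec (hσ : IsUnit ((1 : Matrix (Fin q) (Fin q) ℝ).map σ))
    (hA : A ∈ Intertwiner σ q) (x : Fin q → ℝ) :
    actCoord σ q (A *ᵥ x) = phiMap σ q A *ᵥ actCoord σ q x := by
  obtain ⟨-, B, -, h⟩ := hA
  rw [phiMap_eq_of_intertwines hσ h, h]

theorem layer_mul_mulVec {p : ℕ} (hσ : IsUnit ((1 : Matrix (Fin q) (Fin q) ℝ).map σ))
    (hA : A ∈ Intertwiner σ q) (W : Matrix (Fin q) (Fin p) ℝ) (b : Fin q → ℝ) (x : Fin p → ℝ) :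
    layer σ (A * W) (A *ᵥ b) x = phiMap σ q A *ᵥ layer σ W b x := by
  rw [layer, ← mulVec_mulVec, ← mulVec_add, actCoord_mulVec hσ hA, layer]

theorem layer_mul_inv_mulVec {p : ℕ} {P : Matrix (Fin p) (Fin p) ℝ} (hP : IsUnit P)
    (W : Matrix (Fin q) (Fin p) ℝ) (b : Fin q → ℝ) (x : Fin p → ℝ) :
    layer σ (W * P⁻¹) b (P *ᵥ x) = layer σ W b x := by
  rw [layer, mul_inv_mulVec_mulVec hP, layer]

end Intertwiners

section Networks

variable {σ : ℝ → ℝ} {n : ℕ → ℕ} {W : ∀ i : ℕ, Matrix (Fin (n (i + 1))) (Fin (n i)) ℝ}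
  {b : ∀ i : ℕ, Fin (n (i + 1)) → ℝ}

theorem seg_succ (m j : ℕ) (x : Fin (n m) → ℝ) :
    seg σ n W b m (j + 1) x = layer σ (W (m + j)) (b (m + j)) (seg σ n W b m j x) :=
  rfl

theorem fwdHidden_succ (m : ℕ) (x : Fin (n 0) → ℝ) :
    fwdHidden σ n W b (m + 1) x = layer σ (W m) (b m) (fwdHidden σ n W b m x) :=
  rfl

theorem fwdHidden_add (m j : ℕ) (x : Fin (n 0) → ℝ) :
    fwdHidden σ n W b (m + j) x = seg σ n W b m j (fwdHidden σ n W b m x) := by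
  induction j with
  | zero => rfl
  | succ j ih => rw [seg_succ, ← ih]; exact fwdHidden_succ (m + j) x

variable {σ' : ℝ → ℝ} {n' : ℕ → ℕ}
  {W' : ∀ i : ℕ, Matrix (Fin (n' (i + 1))) (Fin (n' i)) ℝ} {b' : ∀ i : ℕ, Fin (n' (i + 1)) → ℝ}
  (g : ∀ i : ℕ, (Fin (n i) → ℝ) → Fin (n' i) → ℝ) {m : ℕ}

theorem seg_semiconj {j : ℕ}
    (hg : ∀ i, m ≤ i → i < m + j →
      ∀ x, layer σ' (W' i) (b' i) (g i x) = g (i + 1) (layer σ (W i) (b i) x))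
    (x : Fin (n m) → ℝ) :
    seg σ' n' W' b' m j (g m x) = g (m + j) (seg σ n W b m j x) := by
  induction j with
  | zero => rfl
  | succ j ih =>
    rw [seg_succ, ih fun i hmi hij => hg i hmi (by omega), seg_succ]
    exact hg (m + j) (by omega) (by omega) _

theorem fwdHidden_semiconj (hm : 1 ≤ m)
    (hg : ∀ i, 1 ≤ i → i < m →
      ∀ x, layer σ' (W' i) (b' i) (g i x) = g (i + 1) (layer σ (W i) (b i) x))
    {x : Fin (n 0) → ℝ} {x' : Fin (n' 0) → ℝ}
    (hx : layer σ' (W' 0) (b' 0) x' = g 1 (layer σ (W 0) (b 0) x)) :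
    fwdHidden σ' n' W' b' m x' = g m (fwdHidden σ n W b m x) := by
  induction m, hm using Nat.le_induction with
  | base => exact hx
  | succ m hm ih =>
    rw [fwdHidden_succ, ih fun i h1 hi => hg i h1 (by omega), hg m hm (by omega), fwdHidden_succ]

end Networks

/-- Weight-space symmetries from intertwiner groups.  The network has depth `k = m + r + 1`,
dimensions `n 0, …, n k`, activated layers `ℓ_i(x) = σ_{n_i}(W_{i-1}·x + b_{i-1})`
(0-indexed weights) for `i < k` and final linear layer `ℓ_k(x) = W_{k-1}·x + b_{k-1}`.
Given `A_i ∈ G_{σ_{n_i}}` for `1 ≤ i ≤ k - 1 = m + r` (and `A_k = 1`), the transformed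
weights `W'` and biases `b'` (per `hW'0, hW', hb'`) satisfy, for the layer `m`
(with `1 ≤ m ≤ k - 1`):
`f'_{≤m} = φ_σ(A_m) ∘ f_{≤m}`, `f'_{>m} = f_{>m} ∘ φ_σ(A_m)⁻¹`, and `f' = f`. -/
theorem intertwiner_weight_symmetry (σ : ℝ → ℝ) (n : ℕ → ℕ) (hn : ∀ i, 0 < n i)
    (m r : ℕ) (hm : 1 ≤ m)
    (hσI : ∀ i : ℕ, 1 ≤ i → i ≤ m + r →
      IsUnit ((1 : Matrix (Fin (n i)) (Fin (n i)) ℝ).map σ))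
    (W : ∀ i : ℕ, Matrix (Fin (n (i + 1))) (Fin (n i)) ℝ)
    (b : ∀ i : ℕ, Fin (n (i + 1)) → ℝ)
    (A : ∀ i : ℕ, Matrix (Fin (n i)) (Fin (n i)) ℝ)
    (hA : ∀ i : ℕ, 1 ≤ i → i ≤ m + r → A i ∈ Intertwiner σ (n i))
    (hAtop : A (m + r + 1) = 1)
    (W' : ∀ i : ℕ, Matrix (Fin (n (i + 1))) (Fin (n i)) ℝ)
    (b' : ∀ i : ℕ, Fin (n (i + 1)) → ℝ)
    (hW'0 : W' 0 = A 1 * W 0)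
    (hW' : ∀ i : ℕ, 1 ≤ i → i ≤ m + r →
      W' i = A (i + 1) * W i * (phiMap σ (n i) (A i))⁻¹)
    (hb' : ∀ i : ℕ, i ≤ m + r → b' i = (A (i + 1)).mulVec (b i)) :
    (∀ x : Fin (n 0) → ℝ,
      fwdHidden σ n W' b' m x = (phiMap σ (n m) (A m)).mulVec (fwdHidden σ n W b m x)) ∧
    (∀ y : Fin (n m) → ℝ,
      (W' (m + r)).mulVec (seg σ n W' b' m r y) + b' (m + r) =
        (W (m + r)).mulVec
          (seg σ n W b m r ((phiMap σ (n m) (A m))⁻¹.mulVec y)) + b (m + r)) ∧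
    (∀ x : Fin (n 0) → ℝ,
      (W' (m + r)).mulVec (fwdHidden σ n W' b' (m + r) x) + b' (m + r) =
        (W (m + r)).mulVec (fwdHidden σ n W b (m + r) x) + b (m + r)) := by
  let P (i : ℕ) : Matrix (Fin (n i)) (Fin (n i)) ℝ := phiMap σ (n i) (A i)
  have isUnit_P {i} (h1 : 1 ≤ i) (hi : i ≤ m + r) : IsUnit (P i) :=
    isUnit_phiMap (hσI i h1 hi) (hA i h1 hi)
  have first_layer (x) : layer σ (W' 0) (b' 0) x = P 1 *ᵥ layer σ (W 0) (b 0) x := by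
    rw [hW'0, hb' 0 (by omega), layer_mul_mulVec (hσI 1 le_rfl (by omega)) (hA 1 le_rfl (by omega))]
  have inner_layer (i) (h1 : 1 ≤ i) (hi : i < m + r) (x) :
      layer σ (W' i) (b' i) (P i *ᵥ x) = P (i + 1) *ᵥ layer σ (W i) (b i) x := by
    rw [hW' i h1 hi.le, hb' i hi.le, layer_mul_inv_mulVec (isUnit_P h1 hi.le),
      layer_mul_mulVec (hσI _ (by omega) hi) (hA _ (by omega) hi)]
  have last_layer (x) :
      W' (m + r) *ᵥ (P (m + r) *ᵥ x) + b' (m + r) = W (m + r) *ᵥ x + b (m + r) := by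
    rw [hW' _ (by omega) le_rfl, hb' _ le_rfl, hAtop, Matrix.one_mul, one_mulVec,
      mul_inv_mulVec_mulVec (isUnit_P (by omega) le_rfl)]
  have hidden (x) : fwdHidden σ n W' b' m x = P m *ᵥ fwdHidden σ n W b m x :=
    fwdHidden_semiconj (fun i => (P i).mulVec) hm (fun i h1 hi => inner_layer i h1 (by omega))
      (first_layer x)
  have tail (x) : seg σ n W' b' m r (P m *ᵥ x) = P (m + r) *ᵥ seg σ n W b m r x :=
    seg_semiconj (fun i => (P i).mulVec) (fun i hmi => inner_layer i (hm.trans hmi)) x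
  refine ⟨hidden, fun y => ?_, fun x => ?_⟩
  · rw [← last_layer, ← tail, mulVec_inv_mulVec (isUnit_P hm (by omega))]
  · rw [fwdHidden_add, fwdHidden_add, hidden, tail, last_layer]
end
end

section
/- Let A be a d×d real matrix such that max_{1≤i≤d}((A·x)_i·(A·y)_i) = max_{1≤i≤d}(x_i·y_i) for all x, y ∈ ℝ^d. Then A = P·D where P is a d×d permutation matrix and D is a diagonal matrix whose diagonal entries all lie in {+1, −1}; equivalently, there exist a permutation π of {1,…,d} and signs ε_1,…,ε_d ∈ {+1,−1} such that A·e_j = ε_j·e_{π(j)} for all j. -/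
open Matrix

noncomputable section

/-! For `x = y` the hypothesis says that `A` preserves the sup norm. Contracting the sup norm
bounds the absolute sum of each row by `1`, and preserving the norm of `e_j` gives column `j` an
entry of absolute value at least `1`. Such an entry exhausts its row, so distinct columns have
their large entries in distinct rows, and by counting every row contains exactly one of them. -/

theorem eq_zero_of_sum_abs_le_abs {ι G : Type*} [AddCommGroup G] [LinearOrder G]
    [IsOrderedAddMonoid G] {s : Finset ι} {v : ι → G} {j k : ι} (hj : j ∈ s) (hk : k ∈ s)
    (hkj : k ≠ j) (hv : ∑ i ∈ s, |v i| ≤ |v j|) : v k = 0 := by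
  have hpair : |v k| + |v j| ≤ |v j| :=
    (Finset.add_le_sum (fun i _ ↦ abs_nonneg (v i)) hk hj hkj).trans hv
  exact abs_nonpos_iff.mp (add_le_iff_nonpos_left.mp hpair)

section OrderedRing

variable {ι m n R : Type*} [Ring R] [LinearOrder R] [IsStrictOrderedRing R]

theorem abs_sign_le_one (a : R) : |(SignType.sign a : R)| ≤ 1 := by
  cases SignType.sign a <;> simp

theorem sum_abs_le_of_forall_dotProduct_le [Fintype ι] {v : ι → R} {c : R}
    (hv : ∀ x : ι → R, (∀ i, |x i| ≤ 1) → v ⬝ᵥ x ≤ c) : ∑ i, |v i| ≤ c := by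
  simpa only [dotProduct, self_mul_sign] using
    hv (fun i ↦ SignType.sign (v i)) fun i ↦ abs_sign_le_one (v i)

theorem sup'_mul_self_le_one_iff {s : Finset ι} (hs : s.Nonempty) {x : ι → R} :
    s.sup' hs (fun i ↦ x i * x i) ≤ 1 ↔ ∀ i ∈ s, |x i| ≤ 1 := by
  simp only [Finset.sup'_le_iff, abs_le_one_iff_mul_self_le_one]

theorem one_le_sup'_mul_self_iff {s : Finset ι} (hs : s.Nonempty) {x : ι → R} :
    1 ≤ s.sup' hs (fun i ↦ x i * x i) ↔ ∃ i ∈ s, 1 ≤ |x i| := by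
  simp only [Finset.le_sup'_iff, ← pow_two, one_le_sq_iff_one_le_abs]

theorem sum_abs_row_le_one_of_sup'_mul_self_le [Fintype m] [Nonempty m] [Fintype n] [Nonempty n]
    {A : Matrix m n R}
    (hA : ∀ x : n → R,
      Finset.univ.sup' Finset.univ_nonempty (fun i ↦ (A *ᵥ x) i * (A *ᵥ x) i) ≤
        Finset.univ.sup' Finset.univ_nonempty (fun j ↦ x j * x j)) (i : m) :
    ∑ j, |A i j| ≤ 1 := by
  refine sum_abs_le_of_forall_dotProduct_le fun x hx ↦ ?_
  have hAx := (hA x).trans ((sup'_mul_self_le_one_iff _).mpr fun j _ ↦ hx j)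
  exact (le_abs_self _).trans ((sup'_mul_self_le_one_iff _).mp hAx i (Finset.mem_univ i))

theorem apply_eq_zero_of_sum_abs_row_le_one [Fintype n] {A : Matrix m n R} {i : m} {j k : n}
    (hrow : ∑ l, |A i l| ≤ 1) (hj : 1 ≤ |A i j|) (hkj : k ≠ j) : A i k = 0 :=
  eq_zero_of_sum_abs_le_abs (Finset.mem_univ j) (Finset.mem_univ k) hkj (hrow.trans hj)

theorem injective_of_one_le_abs_apply [Fintype n] {A : Matrix m n R} {p : n → m}
    (hrow : ∀ i, ∑ j, |A i j| ≤ 1) (hp : ∀ j, 1 ≤ |A (p j) j|) : Function.Injective p := by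
  intro j k hjk
  by_contra hne
  have hzero : A (p k) j = 0 := apply_eq_zero_of_sum_abs_row_le_one (hrow (p k)) (hp k) hne
  have hone : 1 ≤ |A (p k) j| := hjk ▸ hp j
  rw [hzero, abs_zero] at hone
  exact hone.not_gt one_pos

variable [Fintype ι] [DecidableEq ι]

theorem exists_perm_sign_of_sum_abs_row_le_one {A : Matrix ι ι R}
    (hrow : ∀ i, ∑ j, |A i j| ≤ 1) (hcol : ∀ j, ∃ i, 1 ≤ |A i j|) :
    ∃ (π : Equiv.Perm ι) (ε : ι → R),
      (∀ j, ε j = 1 ∨ ε j = -1) ∧ ∀ j, A.col j = ε j • Pi.single (π j) 1 := by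
  choose p hp using hcol
  have hinj : Function.Injective p := injective_of_one_le_abs_apply hrow hp
  have hbij : Function.Bijective p := Finite.injective_iff_bijective.mp hinj
  have habs (j : ι) : |A (p j) j| = 1 :=
    ((Finset.single_le_sum (fun k _ ↦ abs_nonneg (A (p j) k)) (Finset.mem_univ j)).trans
      (hrow (p j))).antisymm (hp j)
  refine ⟨Equiv.ofBijective p hbij, fun j ↦ A (p j) j,
    fun j ↦ eq_or_eq_neg_of_abs_eq (habs j), fun j ↦ ?_⟩
  ext i
  obtain ⟨k, rfl⟩ := hbij.surjective i
  obtain rfl | hjk := eq_or_ne j k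
  · simp
  · have hzero : A (p k) j = 0 := apply_eq_zero_of_sum_abs_row_le_one (hrow (p k)) (hp k) hjk
    simp [hzero, hinj.ne hjk.symm]

theorem hadamard_max_symmetries_general [Nonempty ι] (A : Matrix ι ι R)
    (h : ∀ x : ι → R,
      Finset.univ.sup' Finset.univ_nonempty (fun i ↦ (A *ᵥ x) i * (A *ᵥ x) i) =
        Finset.univ.sup' Finset.univ_nonempty (fun i ↦ x i * x i)) :
    ∃ (π : Equiv.Perm ι) (ε : ι → R),
      (∀ j, ε j = 1 ∨ ε j = -1) ∧
      ∀ j, A *ᵥ Pi.single j 1 = ε j • (Pi.single (π j) 1 : ι → R) := by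
  have hrow : ∀ i, ∑ j, |A i j| ≤ 1 := sum_abs_row_le_one_of_sup'_mul_self_le fun x ↦ (h x).le
  have hcol (j : ι) : ∃ i, 1 ≤ |A i j| := by
    have hsingle : ∃ i ∈ Finset.univ, 1 ≤ |(A *ᵥ Pi.single j 1) i| := by
      rw [← one_le_sup'_mul_self_iff Finset.univ_nonempty, h, one_le_sup'_mul_self_iff]
      exact ⟨j, Finset.mem_univ j, by simp⟩
    simpa using hsingle
  simpa only [mulVec_single_one] using exists_perm_sign_of_sum_abs_row_le_one hrow hcol

end OrderedRing

/-- If a `d × d` real matrix `A` preserves the quantity `max_i (x_i·y_i)` in the sense that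
`max_i ((Ax)_i·(Ay)_i) = max_i (x_i·y_i)` for all `x, y ∈ ℝ^d`, then `A = P·D` with `P` a
permutation matrix and `D` diagonal with entries in `{±1}`: there exist a permutation `π`
and signs `ε_j ∈ {1, -1}` with `A·e_j = ε_j·e_{π j}` for all `j`. -/
theorem hadamard_max_symmetries (d : ℕ) (hd : 0 < d)
    (A : Matrix (Fin d) (Fin d) ℝ)
    (h : ∀ x y : Fin d → ℝ,
      Finset.univ.sup' (⟨⟨0, hd⟩, Finset.mem_univ _⟩ : Finset.univ.Nonempty)
          (fun i => A.mulVec x i * A.mulVec y i) =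
        Finset.univ.sup' (⟨⟨0, hd⟩, Finset.mem_univ _⟩ : Finset.univ.Nonempty)
          (fun i => x i * y i)) :
    ∃ (π : Equiv.Perm (Fin d)) (ε : Fin d → ℝ),
      (∀ j, ε j = 1 ∨ ε j = -1) ∧
      ∀ j, A.mulVec (Pi.single j 1) = ε j • (Pi.single (π j) 1 : Fin d → ℝ) := by
  have : Nonempty (Fin d) := ⟨⟨0, hd⟩⟩
  exact hadamard_max_symmetries_general A fun x ↦ h x x
end
end
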